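/- The rank of the degree-n graded piece Lie_r^n of the free Lie ring on r generators equals (1/n)·Σ_{d | n} μ(d)·r^{n/d}, where μ is the Möbius function (Witt's formula). -/

import Mathlib

/-- The span of brackets `⁅a, b⁆` with `a ∈ A`, `b ∈ B`, for submodules of a Lie ring. -/
def bracketSpan {L : Type*} [LieRing L] [LieAlgebra ℤ L] (A B : Submodule ℤ L) :
    Submodule ℤ L :=
  Submodule.span ℤ {x | ∃ a ∈ A, ∃ b ∈ B, x = ⁅a, b⁆}

/-- The span of the generators of the free Lie ring on `r` generators. -/
noncomputable def freeLieDegreeOne (r : ℕ) : Submodule ℤ (FreeLieAlgebra ℤ (Fin r)) :=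
  Submodule.span ℤ (Set.range (FreeLieAlgebra.of ℤ))

/-- The degree-`n` graded piece `Lie_r^n` of the free Lie ring on `r` generators: the
span of the `n`-fold brackets of the generators. -/
noncomputable def freeLiePiece (r : ℕ) : ℕ → Submodule ℤ (FreeLieAlgebra ℤ (Fin r))
  | 0 => ⊥
  | 1 => freeLieDegreeOne r
  | n + 2 => bracketSpan (freeLieDegreeOne r) (freeLiePiece r (n + 1))

/-!
A Lyndon word is a nonempty word that is smaller than all its proper nonempty suffixes. Cutting it
before its least proper suffix writes it as a product of two shorter Lyndon words `u < v`, and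
iterating this turns the word into a bracket in the free Lie algebra. The brackets of the Lyndon
words of length `n` form a basis of the degree `n` component. They span, because the Jacobi identity
rewrites the bracket of two Lyndon words `u < v` in terms of Lyndon words with the same letters that
are smaller than `v`. They are independent, because the image of each of them in the free
associative algebra is the Lyndon word itself plus a combination of larger words.

To count Lyndon words, identify words of length `n` with streams fixed by the `n`-th iterate of the
shift. Every cycle of length `n` of the shift contains exactly one stream whose first `n` letters
form a Lyndon word, so `r ^ n` is the sum of `d` times the number of Lyndon words of length `d` over
the divisors `d` of `n`, and Möbius inversion gives the formula.
-/

section LexOrder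

variable {α : Type*} [LinearOrder α] {u v x y : List α}

theorem strictMono_append_left (u : List α) : StrictMono (u ++ ·) :=
  fun _ _ => List.append_left_lt

theorem self_le_append (u v : List α) : u ≤ u ++ v :=
  not_lt.1 (List.not_lt.2 List.le_append_left)

theorem lt_append_of_ne_nil (u : List α) (hv : v ≠ []) : u < u ++ v :=
  (self_le_append u v).lt_of_ne (by simpa using hv)

theorem append_lt_append_of_not_prefix (h : u < v) (hp : ¬u <+: v) (x y : List α) :
    u ++ x < v ++ y := by
  induction u generalizing v with
  | nil => exact absurd List.nil_prefix hp
  | cons a u ih =>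
    cases v with
    | nil => exact absurd h (List.not_lt_nil _)
    | cons b v =>
      simp only [List.cons_append, List.cons_lt_cons_iff] at h ⊢
      rcases h with hab | ⟨rfl, huv⟩
      · exact Or.inl hab
      · exact Or.inr ⟨rfl, ih huv fun hp' => hp (by simpa using hp')⟩

theorem append_lt_append_of_length_le (h : u < v) (hl : v.length ≤ u.length) (x y : List α) :
    u ++ x < v ++ y :=
  append_lt_append_of_not_prefix h (fun hp => h.ne (hp.eq_of_length_le hl)) x y

theorem append_le_append_of_length_le (h : u ≤ v) (hl : v.length ≤ u.length) (hxy : x ≤ y) :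
    u ++ x ≤ v ++ y := by
  rcases h.lt_or_eq with huv | rfl
  · exact (append_lt_append_of_length_le huv hl x y).le
  · exact (strictMono_append_left u).monotone hxy

end LexOrder

section LyndonWord

variable {α : Type*} [LinearOrder α] {u v w p s : List α}

/-- Lyndon words: nonempty words that are lexicographically smaller than each of their proper
nonempty suffixes. -/
structure IsLyndon (w : List α) : Prop where
  ne_nil : w ≠ []
  lt_of_append_eq : ∀ ⦃p s⦄, p ≠ [] → s ≠ [] → p ++ s = w → w < s

/-- The Lyndon words of length `n` over the alphabet `α`. -/
def lyndonWords (α : Type*) [LinearOrder α] (n : ℕ) : Set (List α) :=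
  {w | IsLyndon w ∧ w.length = n}

theorem isLyndon_singleton (a : α) : IsLyndon [a] where
  ne_nil := List.cons_ne_nil a []
  lt_of_append_eq p s hp hs h := by
    rcases List.append_eq_singleton_iff.1 h with ⟨rfl, -⟩ | ⟨-, rfl⟩
    · exact absurd rfl hp
    · exact absurd rfl hs

theorem IsLyndon.append_lt_right (hu : IsLyndon u) (hv : IsLyndon v) (h : u < v) :
    u ++ v < v := by
  by_cases hp : u <+: v
  · obtain ⟨t, rfl⟩ := hp
    have ht : t ≠ [] := by
      rintro rfl
      simp at h
    exact strictMono_append_left u (hv.lt_of_append_eq hu.ne_nil ht rfl)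
  · simpa using append_lt_append_of_not_prefix h hp v []

theorem IsLyndon.append (hu : IsLyndon u) (hv : IsLyndon v) (h : u < v) : IsLyndon (u ++ v) where
  ne_nil := by simp [hu.ne_nil]
  lt_of_append_eq p s hp hs heq := by
    have huv : u ++ v < v := hu.append_lt_right hv h
    rcases List.append_eq_append_iff.1 heq with ⟨t, rfl, rfl⟩ | ⟨t, rfl, rfl⟩
    · rcases eq_or_ne t [] with rfl | ht
      · simpa using huv
      · exact append_lt_append_of_length_le (hu.lt_of_append_eq hp ht rfl) (by simp) v v
    · rcases eq_or_ne t [] with rfl | ht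
      · simpa using huv
      · exact huv.trans (hv.lt_of_append_eq ht hs rfl)

theorem IsLyndon.lt_rotate (hw : IsLyndon w) {k : ℕ} (hk : k ≠ 0) (hkw : k < w.length) :
    w < w.rotate k := by
  have hlt : w < w.drop k :=
    hw.lt_of_append_eq (by simp [hk, hw.ne_nil]) (by simpa using hkw) (List.take_append_drop k w)
  rw [List.rotate_eq_drop_append_take hkw.le]
  exact hlt.trans_le (self_le_append _ _)

theorem isLyndon_of_forall_lt_rotate (hw : w ≠ [])
    (h : ∀ k, k ≠ 0 → k < w.length → w < w.rotate k) : IsLyndon w := by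
  refine ⟨hw, fun p s hp hs heq => ?_⟩
  subst heq
  have hrot : p ++ s < s ++ p := by
    simpa using h p.length (by simpa using hp) (by simpa [List.length_pos_iff] using hs)
  by_contra hlt
  have hne : s ≠ p ++ s := by simpa using hp
  replace hlt : s < p ++ s := lt_of_le_of_ne (not_lt.1 hlt) hne
  by_cases hpre : s <+: p ++ s
  · obtain ⟨t, ht⟩ := hpre
    have htp : t < p := (strictMono_append_left s).lt_iff_lt.1 (by simpa [ht] using hrot)
    have hlen : p.length = t.length := by
      have := congrArg List.length ht
      simp only [List.length_append] at this
      omega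
    have hrot' : p ++ s < t ++ s := by
      have := h s.length (by simpa using hs) (by simpa [List.length_pos_iff] using hp)
      rwa [← ht, List.rotate_append_length_eq, ht] at this
    exact lt_asymm hrot' (append_lt_append_of_length_le htp hlen.le s s)
  · exact lt_asymm hrot (by simpa using append_lt_append_of_not_prefix hlt hpre p [])

end LyndonWord

section CountPeriodic

open Function

variable {X β : Type*} {f : X → X} {n : ℕ}

theorem ncard_ptsOfPeriod_eq_sum_divisors (hn : n ≠ 0) (hfin : (ptsOfPeriod f n).Finite) :
    (ptsOfPeriod f n).ncard = ∑ d ∈ n.divisors, {x | minimalPeriod f x = d}.ncard := by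
  classical
  have hmaps : Set.MapsTo (minimalPeriod f) hfin.toFinset n.divisors := fun x hx =>
    Nat.mem_divisors.2 ⟨IsPeriodicPt.minimalPeriod_dvd (hfin.mem_toFinset.1 hx), hn⟩
  rw [Set.ncard_eq_toFinset_card _ hfin, Finset.card_eq_sum_card_fiberwise hmaps]
  refine Finset.sum_congr rfl fun d hd => ?_
  rw [← Set.ncard_coe_finset]
  congr 1
  ext x
  simp only [Finset.coe_filter, Set.Finite.mem_toFinset, Set.mem_ofPred_eq, and_iff_right_iff_imp]
  rintro rfl
  exact isPeriodicPt_iff_minimalPeriod_dvd.2 (Nat.dvd_of_mem_divisors hd)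

theorem iterate_sub_apply_iterate {x : X} (hx : IsPeriodicPt f n x) {k : ℕ} (hk : k ≤ n) :
    f^[n - k] (f^[k] x) = x := by
  rw [← iterate_add_apply, Nat.sub_add_cancel hk, hx]

/-- The points of minimal period `n` at which `κ` is smallest along the orbit. When `κ` is injective
on points of period `n`, they form a system of representatives of the `n`-cycles of `f`. -/
def orbitMinimizers [LE β] (f : X → X) (n : ℕ) (κ : X → β) : Set X :=
  {x | minimalPeriod f x = n ∧ ∀ k, κ x ≤ κ (f^[k] x)}

theorem exists_iterate_mem_orbitMinimizers [LinearOrder β] (hn : n ≠ 0) (κ : X → β) {x : X}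
    (hx : minimalPeriod f x = n) : ∃ k < n, f^[k] x ∈ orbitMinimizers f n κ := by
  have hper : IsPeriodicPt f n x := hx ▸ isPeriodicPt_minimalPeriod f x
  obtain ⟨k, hk, hmin⟩ := Finset.exists_min_image (Finset.range n) (fun k => κ (f^[k] x))
    (Finset.nonempty_range_iff.2 hn)
  refine ⟨k, Finset.mem_range.1 hk, ?_, fun j => ?_⟩
  · rwa [minimalPeriod_apply_iterate ⟨n, hn.bot_lt, hper⟩]
  · rw [← iterate_add_apply, ← hper.iterate_mod_apply (j + k)]
    exact hmin _ (Finset.mem_range.2 (Nat.mod_lt _ hn.bot_lt))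

theorem le_of_iterate_eq_iterate [LE β] {κ : X → β} {x y : X} (hx : IsPeriodicPt f n x)
    (hy : y ∈ orbitMinimizers f n κ) {i j : ℕ} (hi : i ≤ n) (h : f^[i] x = f^[j] y) :
    κ y ≤ κ x := by
  rw [← iterate_sub_apply_iterate hx hi, h, ← iterate_add_apply]
  exact hy.2 _

theorem ncard_minimalPeriod_eq_mul_ncard_orbitMinimizers [LinearOrder β] (hn : n ≠ 0) {κ : X → β}
    (hκ : Set.InjOn κ (ptsOfPeriod f n)) :
    {x | minimalPeriod f x = n}.ncard = n * (orbitMinimizers f n κ).ncard := by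
  have hper : ∀ {x}, minimalPeriod f x = n → IsPeriodicPt f n x :=
    fun hx => hx ▸ isPeriodicPt_minimalPeriod f _
  let F : Fin n × orbitMinimizers f n κ → {x | minimalPeriod f x = n} := fun z =>
    ⟨f^[z.1] z.2, (minimalPeriod_apply_iterate ⟨n, hn.bot_lt, hper z.2.2.1⟩ _).trans z.2.2.1⟩
  suffices hF : Bijective F by
    rw [← Nat.card_coe_set_eq, ← Nat.card_coe_set_eq, ← Nat.card_eq_of_bijective F hF,
      Nat.card_prod, Nat.card_fin]
  constructor
  · rintro ⟨i, x, hx⟩ ⟨j, y, hy⟩ h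
    replace h : f^[i] x = f^[j] y := congrArg Subtype.val h
    obtain rfl : x = y := hκ (hper hx.1) (hper hy.1) <| le_antisymm
      (le_of_iterate_eq_iterate (hper hy.1) hx j.2.le h.symm)
      (le_of_iterate_eq_iterate (hper hx.1) hy i.2.le h)
    obtain rfl : i = j := Fin.ext <| iterate_injOn_Iio_minimalPeriod
      (Set.mem_Iio.2 (i.2.trans_eq hx.1.symm)) (Set.mem_Iio.2 (j.2.trans_eq hx.1.symm)) h
    rfl
  · rintro ⟨x, hx⟩
    obtain ⟨k, hk, hmin⟩ := exists_iterate_mem_orbitMinimizers hn κ hx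
    refine ⟨⟨⟨(n - k) % n, Nat.mod_lt _ hn.bot_lt⟩, f^[k] x, hmin⟩, Subtype.ext ?_⟩
    change f^[(n - k) % n] (f^[k] x) = x
    rw [(hper hmin.1).iterate_mod_apply, iterate_sub_apply_iterate (hper hx) hk.le]

end CountPeriodic

section PeriodicStream

open Function

variable {α : Type*} {n : ℕ} {s t : Stream' α}

theorem iterate_tail (k : ℕ) (s : Stream' α) : Stream'.tail^[k] s = s.drop k := by
  induction k generalizing s with
  | zero => rfl
  | succ k ih => rw [iterate_succ_apply, ih, Stream'.drop_tail']

theorem get_mod_of_isPeriodicPt_tail (hs : IsPeriodicPt Stream'.tail n s) (i : ℕ) :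
    s.get (i % n) = s.get i := by
  rw [← Stream'.head_drop, ← Stream'.head_drop, ← iterate_tail, ← iterate_tail,
    hs.iterate_mod_apply]

theorem injOn_take_ptsOfPeriod_tail (hn : n ≠ 0) :
    Set.InjOn (Stream'.take n) (ptsOfPeriod (Stream'.tail (α := α)) n) := by
  intro s hs t ht h
  ext i
  have hi : i % n < n := Nat.mod_lt _ hn.bot_lt
  rw [← get_mod_of_isPeriodicPt_tail hs, ← get_mod_of_isPeriodicPt_tail ht, ← Option.some_inj,
    ← Stream'.getElem?_take hi, ← Stream'.getElem?_take hi, h]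

theorem isPeriodicPt_tail_cycle (l : List α) (hl : l ≠ []) :
    IsPeriodicPt Stream'.tail l.length (Stream'.cycle l hl) :=
  (iterate_tail _ _).trans <|
    (congrArg (Stream'.drop l.length) (Stream'.cycle_eq l hl)).trans
      (Stream'.drop_append_stream l _)

theorem take_length_cycle (l : List α) (hl : l ≠ []) :
    (Stream'.cycle l hl).take l.length = l := by
  rw [Stream'.cycle_eq, Stream'.take_append_of_le_length _ _ _ le_rfl, List.take_length]

theorem ncard_ptsOfPeriod_tail (α : Type*) (hn : n ≠ 0) :
    (ptsOfPeriod (Stream'.tail (α := α)) n).ncard = Nat.card α ^ n := by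
  have hbij : Bijective fun s : ptsOfPeriod (Stream'.tail (α := α)) n =>
      (⟨s.1.take n, Stream'.length_take n s.1⟩ : List.Vector α n) := by
    refine ⟨fun s t h => Subtype.ext ?_, fun ⟨l, hl⟩ => ?_⟩
    · exact injOn_take_ptsOfPeriod_tail hn s.2 t.2 (congrArg Subtype.val h)
    · subst hl
      have hne : l ≠ [] := List.length_pos_iff.1 hn.bot_lt
      exact ⟨⟨_, isPeriodicPt_tail_cycle l hne⟩, Subtype.ext (take_length_cycle l hne)⟩
  rw [← Nat.card_coe_set_eq, Nat.card_congr ((Equiv.ofBijective _ hbij).trans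
    (Equiv.vectorEquivFin α n)), Nat.card_fun, Nat.card_fin]

theorem take_tail_of_isPeriodicPt (hs : IsPeriodicPt Stream'.tail n s) :
    s.tail.take n = (s.take n).rotate 1 := by
  cases n with
  | zero => rfl
  | succ n =>
    have hhead : s.tail.get n = s.head := by
      rw [Stream'.get_tail, ← Stream'.head_drop, ← iterate_tail, hs]
    rw [Stream'.take_succ', Stream'.take_succ, List.rotate_cons_succ, List.rotate_zero, hhead]

theorem take_iterate_tail_of_isPeriodicPt (hs : IsPeriodicPt Stream'.tail n s) (k : ℕ) :
    (Stream'.tail^[k] s).take n = (s.take n).rotate k := by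
  induction k with
  | zero => simp
  | succ k ih =>
    rw [iterate_succ_apply', take_tail_of_isPeriodicPt (hs.apply_iterate k), ih, List.rotate_rotate]

end PeriodicStream

section LyndonCount

open Function

variable {α : Type*} [LinearOrder α] {n : ℕ}

theorem isLyndon_take_of_mem_orbitMinimizers (hn : n ≠ 0) {s : Stream' α}
    (hs : s ∈ orbitMinimizers Stream'.tail n (Stream'.take n)) : IsLyndon (s.take n) := by
  have hper : IsPeriodicPt Stream'.tail n s := hs.1 ▸ isPeriodicPt_minimalPeriod _ _
  refine isLyndon_of_forall_lt_rotate (List.ne_nil_of_length_pos ?_) fun k hk hkn => ?_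
  · rw [Stream'.length_take]
    exact hn.bot_lt
  · rw [Stream'.length_take] at hkn
    rw [← take_iterate_tail_of_isPeriodicPt hper]
    refine lt_of_le_of_ne (hs.2 k) fun heq => ?_
    have hk' : IsPeriodicPt Stream'.tail k s :=
      (injOn_take_ptsOfPeriod_tail hn hper (hper.apply_iterate k) heq).symm
    exact (hk'.minimalPeriod_le hk.bot_lt).not_gt (hs.1 ▸ hkn)

theorem IsLyndon.cycle_mem_orbitMinimizers {w : List α} (hw : IsLyndon w) :
    Stream'.cycle w hw.ne_nil ∈ orbitMinimizers Stream'.tail w.length (Stream'.take w.length) := by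
  have hpos : 0 < w.length := List.length_pos_iff.2 hw.ne_nil
  have hper := isPeriodicPt_tail_cycle w hw.ne_nil
  have htake (k : ℕ) :
      (Stream'.tail^[k] (Stream'.cycle w hw.ne_nil)).take w.length = w.rotate k := by
    rw [take_iterate_tail_of_isPeriodicPt hper, take_length_cycle]
  refine ⟨?_, fun k => ?_⟩
  · by_contra hne
    refine (hw.lt_rotate (hper.minimalPeriod_pos hpos).ne'
      ((hper.minimalPeriod_le hpos).lt_of_ne hne)).ne ?_
    rw [← htake, iterate_minimalPeriod, take_length_cycle]
  · rw [htake, take_length_cycle, ← List.rotate_mod]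
    rcases eq_or_ne (k % w.length) 0 with h0 | h0
    · simp [h0]
    · exact (hw.lt_rotate h0 (Nat.mod_lt _ hpos)).le

theorem ncard_minimalPeriod_tail_eq_mul_ncard_lyndonWords (hn : n ≠ 0) :
    {s : Stream' α | minimalPeriod Stream'.tail s = n}.ncard = n * (lyndonWords α n).ncard := by
  have himage : Stream'.take n '' orbitMinimizers Stream'.tail n (Stream'.take n) =
      lyndonWords α n := by
    ext w
    constructor
    · rintro ⟨s, hs, rfl⟩
      exact ⟨isLyndon_take_of_mem_orbitMinimizers hn hs, Stream'.length_take n s⟩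
    · rintro ⟨hw, rfl⟩
      exact ⟨_, hw.cycle_mem_orbitMinimizers, take_length_cycle w hw.ne_nil⟩
  have hinj := injOn_take_ptsOfPeriod_tail (α := α) hn
  rw [ncard_minimalPeriod_eq_mul_ncard_orbitMinimizers hn hinj, ← himage, Set.InjOn.ncard_image]
  exact hinj.mono fun s hs => hs.1 ▸ isPeriodicPt_minimalPeriod _ _

theorem sum_divisors_mul_ncard_lyndonWords [Finite α] (hn : n ≠ 0) :
    ∑ d ∈ n.divisors, d * (lyndonWords α d).ncard = Nat.card α ^ n := by
  have hfin : (ptsOfPeriod (Stream'.tail (α := α)) n).Finite :=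
    Set.Finite.of_finite_image ((List.finite_length_eq α n).subset
      (Set.image_subset_iff.2 fun s _ => Stream'.length_take n s)) (injOn_take_ptsOfPeriod_tail hn)
  rw [← ncard_ptsOfPeriod_tail α hn, ncard_ptsOfPeriod_eq_sum_divisors hn hfin]
  exact Finset.sum_congr rfl fun d hd =>
    (ncard_minimalPeriod_tail_eq_mul_ncard_lyndonWords (Nat.pos_of_mem_divisors hd).ne').symm

theorem mul_ncard_lyndonWords [Finite α] (hn : n ≠ 0) :
    (n : ℤ) * (lyndonWords α n).ncard =
      ∑ d ∈ n.divisors, ArithmeticFunction.moebius d * (Nat.card α : ℤ) ^ (n / d) := by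
  have hsum : ∀ m > 0, ∑ d ∈ Nat.divisors m, (d : ℤ) * (lyndonWords α d).ncard =
      (Nat.card α : ℤ) ^ m :=
    fun m hm => mod_cast sum_divisors_mul_ncard_lyndonWords (α := α) hm.ne'
  have hinv := ArithmeticFunction.sum_eq_iff_sum_mul_moebius_eq.1 hsum n hn.bot_lt
  simp only [Int.cast_id] at hinv
  rw [← hinv, Nat.sum_divisorsAntidiagonal
    (fun i j => ArithmeticFunction.moebius i * (Nat.card α : ℤ) ^ j)]

end LyndonCount

section StandardFactorization

variable {α : Type*} [LinearOrder α] {u v u' v' u₁ u₂ w : List α}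

/-- `IsStandardFactorization u v` says that `v` is the least proper nonempty suffix of `u ++ v`.
For a Lyndon word this is the same as being its longest proper Lyndon suffix. -/
structure IsStandardFactorization (u v : List α) : Prop where
  left_ne_nil : u ≠ []
  right_ne_nil : v ≠ []
  le_of_append_eq : ∀ ⦃p s⦄, p ≠ [] → s ≠ [] → p ++ s = u ++ v → v ≤ s

theorem IsStandardFactorization.unique (h : IsStandardFactorization u v)
    (h' : IsStandardFactorization u' v') (heq : u ++ v = u' ++ v') : u = u' ∧ v = v' := by
  obtain rfl : v = v' :=
    (h.le_of_append_eq h'.left_ne_nil h'.right_ne_nil heq.symm).antisymm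
      (h'.le_of_append_eq h.left_ne_nil h.right_ne_nil heq)
  exact ⟨List.append_cancel_right heq, rfl⟩

theorem exists_isStandardFactorization (hw : 2 ≤ w.length) :
    ∃ u v, u ++ v = w ∧ IsStandardFactorization u v := by
  obtain ⟨k, hk, hmin⟩ := Finset.exists_min_image (Finset.Ico 1 w.length) (w.drop ·)
    ⟨1, Finset.mem_Ico.2 ⟨le_rfl, hw⟩⟩
  rw [Finset.mem_Ico] at hk
  refine ⟨w.take k, w.drop k, List.take_append_drop k w, ?_, ?_, fun p s hp hs heq => ?_⟩
  · rw [← List.length_pos_iff, List.length_take]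
    omega
  · rw [← List.length_pos_iff, List.length_drop]
    omega
  · obtain rfl : p ++ s = w := heq.trans (List.take_append_drop k w)
    have hp' := List.length_pos_of_ne_nil hp
    have hs' := List.length_pos_of_ne_nil hs
    simpa using hmin p.length (by rw [Finset.mem_Ico, List.length_append]; omega)

theorem IsStandardFactorization.isLyndon_right (h : IsStandardFactorization u v) :
    IsLyndon v where
  ne_nil := h.right_ne_nil
  lt_of_append_eq p s hp hs heq := by
    refine (h.le_of_append_eq (p := u ++ p) (by simp [hp]) hs (by simp [heq])).lt_of_ne ?_
    rintro rfl
    exact hp (by simpa using heq)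

theorem IsStandardFactorization.isLyndon_left (h : IsStandardFactorization u v)
    (huv : IsLyndon (u ++ v)) : IsLyndon u where
  ne_nil := h.left_ne_nil
  lt_of_append_eq p s hp hs heq := by
    have hlt : u ++ v < s ++ v := huv.lt_of_append_eq hp (by simp [hs]) (by simp [← heq])
    have hne : s ≠ u := by
      rintro rfl
      exact hp (by simpa using heq)
    by_contra hus
    have hsu : s < u := (not_lt.1 hus).lt_of_ne hne
    by_cases hpre : s <+: u
    · obtain ⟨t, rfl⟩ := hpre
      have ht : t ≠ [] := by
        rintro rfl
        exact hne (List.append_nil s).symm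
      rw [List.append_assoc] at hlt
      have hvt : v ≤ t ++ v := h.le_of_append_eq hs (by simp [ht]) (List.append_assoc s t v).symm
      exact hvt.not_gt ((strictMono_append_left s).lt_iff_lt.1 hlt)
    · exact lt_asymm hlt (append_lt_append_of_not_prefix hsu hpre v v)

theorem IsStandardFactorization.lt (h : IsStandardFactorization u v) (huv : IsLyndon (u ++ v)) :
    u < v :=
  (lt_append_of_ne_nil u h.right_ne_nil).trans
    (huv.lt_of_append_eq h.left_ne_nil h.right_ne_nil rfl)

theorem IsStandardFactorization.length_left_lt (h : IsStandardFactorization u v) :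
    u.length < (u ++ v).length := by
  simpa [List.length_pos_iff] using h.right_ne_nil

theorem IsStandardFactorization.length_right_lt (h : IsStandardFactorization u v) :
    v.length < (u ++ v).length := by
  simpa [List.length_pos_iff] using h.left_ne_nil

theorem isStandardFactorization_singleton (a : α) (hv : IsLyndon v) :
    IsStandardFactorization [a] v where
  left_ne_nil := List.cons_ne_nil a []
  right_ne_nil := hv.ne_nil
  le_of_append_eq p s hp hs heq := by
    obtain ⟨b, t, rfl⟩ := List.exists_cons_of_ne_nil hp
    obtain ⟨-, htv⟩ := List.cons_eq_cons.1 heq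
    rcases eq_or_ne t [] with rfl | ht
    · exact htv.ge
    · exact (hv.lt_of_append_eq ht hs htv).le

theorem IsStandardFactorization.append (h : IsStandardFactorization u₁ u₂) (hv : IsLyndon v)
    (hvu : v ≤ u₂) : IsStandardFactorization (u₁ ++ u₂) v where
  left_ne_nil := by simp [h.left_ne_nil]
  right_ne_nil := hv.ne_nil
  le_of_append_eq p s hp hs heq := by
    rcases List.append_eq_append_iff.1 heq with ⟨t, ht, rfl⟩ | ⟨t, rfl, rfl⟩
    · rcases eq_or_ne t [] with rfl | ht'
      · exact le_rfl
      · exact (hvu.trans (h.le_of_append_eq hp ht' ht.symm)).trans (self_le_append t v)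
    · rcases eq_or_ne t [] with rfl | ht
      · exact le_rfl
      · exact (hv.lt_of_append_eq ht hs rfl).le

@[elab_as_elim]
theorem IsLyndon.induction {motive : (w : List α) → IsLyndon w → Prop}
    (singleton : ∀ a, motive [a] (isLyndon_singleton a))
    (append : ∀ (u v : List α) (_ : IsStandardFactorization u v) (hu : IsLyndon u)
      (hv : IsLyndon v) (huv : u < v), motive u hu → motive v hv →
      motive (u ++ v) (hu.append hv huv))
    (w : List α) (hw : IsLyndon w) : motive w hw := by
  induction hn : w.length using Nat.strong_induction_on generalizing w with
  | _ n ih =>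
    subst hn
    have hpos : 1 ≤ w.length := List.length_pos_of_ne_nil hw.ne_nil
    rcases hpos.eq_or_lt with hlen | hlen
    · obtain ⟨a, rfl⟩ := List.length_eq_one_iff.1 hlen.symm
      exact singleton a
    · obtain ⟨u, v, rfl, h⟩ := exists_isStandardFactorization hlen
      have hu := h.isLyndon_left hw
      have hv := h.isLyndon_right
      exact append u v h hu hv (h.lt hw) (ih _ h.length_left_lt u hu rfl)
        (ih _ h.length_right_lt v hv rfl)

end StandardFactorization

section LieProduct

variable {R L : Type*} [CommRing R] [LieRing L] [LieAlgebra R L]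

/-- The span of the brackets `⁅a, b⁆` with `a ∈ A` and `b ∈ B`. Unlike Mathlib's bracket of Lie
ideals and Lie submodules, it is defined for arbitrary submodules of a Lie algebra. -/
def lieProduct (A B : Submodule R L) : Submodule R L :=
  Submodule.map₂ (LieAlgebra.ad R L : L →ₗ[R] Module.End R L) A B

variable {A B C A' B' : Submodule R L}

theorem lie_mem_lieProduct {x y : L} (hx : x ∈ A) (hy : y ∈ B) : ⁅x, y⁆ ∈ lieProduct A B :=
  Submodule.apply_mem_map₂ _ hx hy

theorem lieProduct_mono (hA : A ≤ A') (hB : B ≤ B') : lieProduct A B ≤ lieProduct A' B' :=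
  Submodule.map₂_le_map₂ hA hB

theorem lieProduct_eq_span (A B : Submodule R L) :
    lieProduct A B = Submodule.span R (Set.image2 (fun x y => ⁅x, y⁆) (A : Set L) B) :=
  Submodule.map₂_eq_span_image2 _ A B

theorem lieProduct_span_span_le {s t : Set L} :
    lieProduct (Submodule.span R s) (Submodule.span R t) ≤ C ↔
      ∀ x ∈ s, ∀ y ∈ t, ⁅x, y⁆ ∈ C := by
  rw [lieProduct, Submodule.map₂_span_span, Submodule.span_le, Set.image2_subset_iff]
  rfl

theorem lieProduct_lieProduct_le (A B C : Submodule R L) :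
    lieProduct (lieProduct A B) C ≤
      lieProduct A (lieProduct B C) ⊔ lieProduct B (lieProduct A C) := by
  conv_lhs => rw [lieProduct_eq_span A B, ← Submodule.span_eq C]
  rw [lieProduct_span_span_le]
  rintro _ ⟨x, hx, y, hy, rfl⟩ z hz
  rw [lie_lie]
  exact sub_mem
    (Submodule.mem_sup_left (lie_mem_lieProduct hx (lie_mem_lieProduct hy hz)))
    (Submodule.mem_sup_right (lie_mem_lieProduct hy (lie_mem_lieProduct hx hz)))

/-- The span of the right-normed brackets `⁅a₁, ⁅a₂, …, ⁅aₙ₋₁, aₙ⁆…⁆⁆` of `n` elements of `V`, with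
the convention that there is no bracket of zero elements. -/
def liePower (V : Submodule R L) : ℕ → Submodule R L
  | 0 => ⊥
  | 1 => V
  | n + 2 => lieProduct V (liePower V (n + 1))

theorem lieProduct_liePower_le (V : Submodule R L) (m n : ℕ) :
    lieProduct (liePower V m) (liePower V n) ≤ liePower V (m + n) := by
  have lieProduct_self_le (n : ℕ) : lieProduct V (liePower V n) ≤ liePower V (n + 1) := by
    cases n with
    | zero => exact (Submodule.map₂_bot_right _ V).trans_le bot_le
    | succ n => exact le_rfl
  induction m using Nat.twoStepInduction generalizing n with
  | zero => exact (Submodule.map₂_bot_left _ _).trans_le bot_le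
  | one => exact add_comm 1 n ▸ lieProduct_self_le n
  | more m _ ih =>
    refine (lieProduct_lieProduct_le V (liePower V (m + 1)) (liePower V n)).trans (sup_le ?_ ?_)
    · calc
        _ ≤ lieProduct V (liePower V (m + 1 + n)) := lieProduct_mono le_rfl (ih n)
        _ ≤ liePower V (m + 1 + n + 1) := lieProduct_self_le _
        _ = liePower V (m + 2 + n) := by congr 1; omega
    · calc
        _ ≤ lieProduct (liePower V (m + 1)) (liePower V (n + 1)) :=
          lieProduct_mono le_rfl (lieProduct_self_le n)
        _ ≤ liePower V (m + 1 + (n + 1)) := ih (n + 1)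
        _ = liePower V (m + 2 + n) := by congr 1; omega

theorem liePower_le {V : Submodule R L} {W : ℕ → Submodule R L} (hV : V ≤ W 1)
    (hW : ∀ n, lieProduct (W 1) (W n) ≤ W (n + 1)) (n : ℕ) : liePower V n ≤ W n := by
  induction n using Nat.twoStepInduction with
  | zero => exact bot_le
  | one => exact hV
  | more n _ ih => exact (lieProduct_mono hV ih).trans (hW (n + 1))

end LieProduct

theorem finite_setOf_subperm {α : Type*} (l : List α) : {w : List α | w.Subperm l}.Finite := by
  refine (List.finite_toSet (l.sublists.flatMap List.permutations)).subset ?_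
  rintro w ⟨s, hsw, hsl⟩
  exact List.mem_flatMap.2 ⟨s, List.mem_sublists.2 hsl, List.mem_permutations.2 hsw.symm⟩

section LyndonBracket

variable (R : Type*) {α : Type*} [CommRing R] [LinearOrder α] {u v w : List α}

open Classical in
/-- The bracketing of a word along iterated standard factorizations. Only its values at nonempty
words are meaningful; those at Lyndon words form a basis of the free Lie algebra. -/
noncomputable def lyndonBracket (w : List α) : FreeLieAlgebra R α :=
  if h : ∃ x : List α × List α, x.1 ++ x.2 = w ∧ IsStandardFactorization x.1 x.2 then
    ⁅lyndonBracket h.choose.1, lyndonBracket h.choose.2⁆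
  else (w.head?.map (FreeLieAlgebra.of R)).getD 0
termination_by w.length
decreasing_by
  · exact h.choose_spec.2.length_left_lt.trans_eq (congrArg List.length h.choose_spec.1)
  · exact h.choose_spec.2.length_right_lt.trans_eq (congrArg List.length h.choose_spec.1)

theorem lyndonBracket_append (h : IsStandardFactorization u v) :
    lyndonBracket R (u ++ v) = ⁅lyndonBracket R u, lyndonBracket R v⁆ := by
  have hex : ∃ x : List α × List α, x.1 ++ x.2 = u ++ v ∧ IsStandardFactorization x.1 x.2 :=
    ⟨(u, v), rfl, h⟩
  obtain ⟨hu, hv⟩ := hex.choose_spec.2.unique h hex.choose_spec.1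
  rw [lyndonBracket, dif_pos hex, hu, hv]

theorem lyndonBracket_singleton (a : α) : lyndonBracket R [a] = FreeLieAlgebra.of R a := by
  rw [lyndonBracket, dif_neg]
  · rfl
  · rintro ⟨⟨u, v⟩, heq, h⟩
    rcases List.append_eq_singleton_iff.1 heq with ⟨hu, -⟩ | ⟨-, hv⟩
    · exact h.left_ne_nil hu
    · exact h.right_ne_nil hv

/-- The span of the brackets of the Lyndon words that are rearrangements of `l` and smaller than
`v`. -/
noncomputable def lyndonSpanBelow (l v : List α) : Submodule R (FreeLieAlgebra R α) :=
  Submodule.span R (lyndonBracket R '' {w | IsLyndon w ∧ w.Perm l ∧ w < v})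

variable {R} {l l' v' : List α}

theorem lyndonSpanBelow_mono (hl : l.Perm l') (hv : v ≤ v') :
    lyndonSpanBelow R l v ≤ lyndonSpanBelow R l' v' :=
  Submodule.span_mono <| Set.image_mono fun _ ⟨hw, hwl, hwv⟩ => ⟨hw, hwl.trans hl, hwv.trans_le hv⟩

theorem lie_mem_of_mem_lyndonSpanBelow {x y : FreeLieAlgebra R α}
    {T : Submodule R (FreeLieAlgebra R α)} (hy : y ∈ lyndonSpanBelow R l v)
    (h : ∀ w, IsLyndon w → w.Perm l → w < v → ⁅x, lyndonBracket R w⁆ ∈ T) : ⁅x, y⁆ ∈ T := by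
  have hle : (lyndonSpanBelow R l v).map (LieAlgebra.ad R _ x) ≤ T := by
    rw [lyndonSpanBelow, Submodule.map_span_le]
    rintro _ ⟨w, ⟨hw, hwl, hwv⟩, rfl⟩
    exact h w hw hwl hwv
  exact hle (Submodule.mem_map_of_mem hy)

theorem lie_lyndonBracket_mem_of_isStandardFactorization (h : IsStandardFactorization u v)
    (hu : IsLyndon u) (hv : IsLyndon v) (huv : u < v) :
    ⁅lyndonBracket R u, lyndonBracket R v⁆ ∈ lyndonSpanBelow R (u ++ v) v := by
  rw [← lyndonBracket_append R h]
  exact Submodule.subset_span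
    ⟨u ++ v, ⟨hu.append hv huv, List.Perm.refl _, hu.append_lt_right hv huv⟩, rfl⟩

theorem lie_lyndonBracket_mem_of_lt
    (ih : ∀ a b : List α, IsLyndon a → IsLyndon b → a < b → b < v → (a ++ b).Perm l →
      ⁅lyndonBracket R a, lyndonBracket R b⁆ ∈ lyndonSpanBelow R (a ++ b) b)
    {a b : List α} (ha : IsLyndon a) (hb : IsLyndon b) (hav : a < v) (hbv : b < v)
    (hl : (a ++ b).Perm l) :
    ⁅lyndonBracket R a, lyndonBracket R b⁆ ∈ lyndonSpanBelow R l v := by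
  rcases lt_trichotomy a b with hab | rfl | hba
  · exact lyndonSpanBelow_mono hl hbv.le (ih a b ha hb hab hbv hl)
  · simp
  · rw [← lie_skew]
    have hl' : (b ++ a).Perm l := List.perm_append_comm.trans hl
    exact neg_mem (lyndonSpanBelow_mono hl' hav.le (ih b a hb ha hba hav hl'))

/-- Writing `u = u₁ ++ u₂` with `u₂ < v`, the Jacobi identity
`⁅⁅u₁, u₂⁆, v⁆ = ⁅u₁, ⁅u₂, v⁆⁆ - ⁅u₂, ⁅u₁, v⁆⁆` trades the bracket of `u` and `v` for brackets of
pairs of words that are both smaller than `v`. -/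
theorem lie_lyndonBracket_mem_of_forall_smaller (hu : IsLyndon u) (hv : IsLyndon v) (huv : u < v)
    (ih_length : ∀ a b : List α, IsLyndon a → IsLyndon b → a < b →
      (a ++ b).length < (u ++ v).length →
      ⁅lyndonBracket R a, lyndonBracket R b⁆ ∈ lyndonSpanBelow R (a ++ b) b)
    (ih_lt : ∀ a b : List α, IsLyndon a → IsLyndon b → a < b → b < v → (a ++ b).Perm (u ++ v) →
      ⁅lyndonBracket R a, lyndonBracket R b⁆ ∈ lyndonSpanBelow R (a ++ b) b) :
    ⁅lyndonBracket R u, lyndonBracket R v⁆ ∈ lyndonSpanBelow R (u ++ v) v := by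
  have hpos : 1 ≤ u.length := List.length_pos_of_ne_nil hu.ne_nil
  rcases hpos.eq_or_lt with hlen | hlen
  · obtain ⟨a, rfl⟩ := List.length_eq_one_iff.1 hlen.symm
    exact lie_lyndonBracket_mem_of_isStandardFactorization
      (isStandardFactorization_singleton a hv) hu hv huv
  obtain ⟨u₁, u₂, rfl, h⟩ := exists_isStandardFactorization hlen
  rcases le_or_gt v u₂ with hvu | hu₂v
  · exact lie_lyndonBracket_mem_of_isStandardFactorization (h.append hv hvu) hu hv huv
  have hu₁ : IsLyndon u₁ := h.isLyndon_left hu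
  have hu₂ : IsLyndon u₂ := h.isLyndon_right
  have hu₁v : u₁ < v := (h.lt hu).trans hu₂v
  rw [lyndonBracket_append R h, lie_lie]
  refine sub_mem ?_ ?_
  · have hmem := ih_length u₂ v hu₂ hv hu₂v (by simp [List.length_pos_iff, h.left_ne_nil])
    refine lie_mem_of_mem_lyndonSpanBelow hmem fun w hw hwl hwv => ?_
    refine lie_lyndonBracket_mem_of_lt ih_lt hu₁ hw hu₁v hwv ?_
    simpa using hwl.append_left u₁
  · have hmem := ih_length u₁ v hu₁ hv hu₁v (by simp [List.length_pos_iff, h.right_ne_nil])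
    refine lie_mem_of_mem_lyndonSpanBelow hmem fun w hw hwl hwv => ?_
    refine lie_lyndonBracket_mem_of_lt ih_lt hu₂ hw hu₂v hwv ?_
    calc
      (u₂ ++ w).Perm (u₂ ++ (u₁ ++ v)) := hwl.append_left u₂
      _ = u₂ ++ u₁ ++ v := (List.append_assoc u₂ u₁ v).symm
      List.Perm _ (u₁ ++ u₂ ++ v) := List.perm_append_comm.append_right v

theorem lie_lyndonBracket_mem_of_forall_shorter
    (ih_length : ∀ a b : List α, IsLyndon a → IsLyndon b → a < b → (a ++ b).length < l.length →
      ⁅lyndonBracket R a, lyndonBracket R b⁆ ∈ lyndonSpanBelow R (a ++ b) b)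
    (hu : IsLyndon u) (hv : IsLyndon v) (huv : u < v) (hl : (u ++ v).Perm l) :
    ⁅lyndonBracket R u, lyndonBracket R v⁆ ∈ lyndonSpanBelow R (u ++ v) v := by
  have subperm_right {a b : List α} (h : (a ++ b).Perm l) : b.Subperm l :=
    (List.sublist_append_right a b).subperm.trans h.subperm
  have hwf : {w : List α | w.Subperm l}.WellFoundedOn (· < ·) :=
    (finite_setOf_subperm l).wellFoundedOn
  refine hwf.induction
    (P := fun v => ∀ u, IsLyndon u → IsLyndon v → u < v → (u ++ v).Perm l →
      ⁅lyndonBracket R u, lyndonBracket R v⁆ ∈ lyndonSpanBelow R (u ++ v) v)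
    (subperm_right hl) (fun v _ ih_lt u hu hv huv hl => ?_) u hu hv huv hl
  refine lie_lyndonBracket_mem_of_forall_smaller hu hv huv ?_ ?_
  · simpa only [hl.length_eq] using ih_length
  · intro a b ha hb hab hbv hperm
    have hab_perm : (a ++ b).Perm l := hperm.trans hl
    exact ih_lt b (subperm_right hab_perm) hbv a ha hb hab hab_perm

theorem lie_lyndonBracket_mem_lyndonSpanBelow (hu : IsLyndon u) (hv : IsLyndon v) (huv : u < v) :
    ⁅lyndonBracket R u, lyndonBracket R v⁆ ∈ lyndonSpanBelow R (u ++ v) v := by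
  induction hn : (u ++ v).length using Nat.strong_induction_on generalizing u v with
  | _ n ih =>
    subst hn
    exact lie_lyndonBracket_mem_of_forall_shorter
      (fun a b ha hb hab hlen => ih _ hlen ha hb hab rfl) hu hv huv (List.Perm.refl _)

variable (R α) in
/-- The span of the brackets of the Lyndon words of length `n`. -/
noncomputable def lyndonSpan (n : ℕ) : Submodule R (FreeLieAlgebra R α) :=
  Submodule.span R (lyndonBracket R '' lyndonWords α n)

theorem lyndonSpanBelow_le_lyndonSpan (l v : List α) :
    lyndonSpanBelow R l v ≤ lyndonSpan R α l.length :=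
  Submodule.span_mono <| Set.image_mono fun _ ⟨hw, hwl, _⟩ => ⟨hw, hwl.length_eq⟩

theorem lie_lyndonBracket_mem_lyndonSpan (hu : IsLyndon u) (hv : IsLyndon v) :
    ⁅lyndonBracket R u, lyndonBracket R v⁆ ∈ lyndonSpan R α (u.length + v.length) := by
  have mem_of_lt {u v : List α} (hu : IsLyndon u) (hv : IsLyndon v) (huv : u < v) :
      ⁅lyndonBracket R u, lyndonBracket R v⁆ ∈ lyndonSpan R α (u.length + v.length) :=
    List.length_append (as := u) ▸
      lyndonSpanBelow_le_lyndonSpan _ _ (lie_lyndonBracket_mem_lyndonSpanBelow hu hv huv)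
  rcases lt_trichotomy u v with huv | rfl | hvu
  · exact mem_of_lt hu hv huv
  · simp
  · rw [← lie_skew, add_comm]
    exact neg_mem (mem_of_lt hv hu hvu)

theorem lieProduct_lyndonSpan_le (m n : ℕ) :
    lieProduct (lyndonSpan R α m) (lyndonSpan R α n) ≤ lyndonSpan R α (m + n) := by
  refine lieProduct_span_span_le.2 ?_
  rintro _ ⟨u, ⟨hu, rfl⟩, rfl⟩ _ ⟨v, ⟨hv, rfl⟩, rfl⟩
  exact lie_lyndonBracket_mem_lyndonSpan hu hv

variable (R) in
/-- The degree `n` component of the free Lie algebra on `X` for the grading by bracket length. -/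
noncomputable def freeLieComponent (X : Type*) (n : ℕ) : Submodule R (FreeLieAlgebra R X) :=
  liePower (Submodule.span R (Set.range (FreeLieAlgebra.of R))) n

theorem lyndonBracket_mem_freeLieComponent (hw : IsLyndon w) :
    lyndonBracket R w ∈ freeLieComponent R α w.length := by
  induction w, hw using IsLyndon.induction with
  | singleton a => exact lyndonBracket_singleton R a ▸ Submodule.subset_span ⟨a, rfl⟩
  | append u v h _ _ _ ihu ihv =>
    rw [lyndonBracket_append R h, List.length_append]
    exact lieProduct_liePower_le _ _ _ (lie_mem_lieProduct ihu ihv)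

theorem freeLieComponent_eq_lyndonSpan (n : ℕ) :
    freeLieComponent R α n = lyndonSpan R α n := by
  apply le_antisymm
  · refine liePower_le ?_ (fun m => add_comm 1 m ▸ lieProduct_lyndonSpan_le 1 m) n
    rw [Submodule.span_le]
    rintro _ ⟨a, rfl⟩
    exact Submodule.subset_span
      ⟨[a], ⟨isLyndon_singleton a, rfl⟩, lyndonBracket_singleton R a⟩
  · rw [lyndonSpan, Submodule.span_le]
    rintro _ ⟨w, ⟨hw, rfl⟩, rfl⟩
    exact lyndonBracket_mem_freeLieComponent hw

end LyndonBracket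

section LinearIndependent

variable {R M ι : Type*} [Ring R] [AddCommGroup M] [Module R M] [LinearOrder ι]

theorem linearIndependent_of_triangular {v : ι → M} (f : ι → M →ₗ[R] R)
    (hlt : ∀ ⦃i j⦄, i < j → f i (v j) = 0) (hself : ∀ i, f i (v i) = 1) :
    LinearIndependent R v := by
  classical
  rw [linearIndependent_iff']
  intro s g hg
  by_contra! hne
  obtain ⟨i, hi, hgi⟩ := hne
  obtain ⟨m, hm, hmin⟩ := (s.filter (g · ≠ 0)).exists_minimal ⟨i, Finset.mem_filter.2 ⟨hi, hgi⟩⟩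
  obtain ⟨hms, hgm⟩ := Finset.mem_filter.1 hm
  refine hgm ?_
  have hfm : ∑ j ∈ s, g j * f m (v j) = 0 := by simpa using congrArg (f m) hg
  rwa [Finset.sum_eq_single_of_mem m hms, hself, mul_one] at hfm
  intro j hj hjm
  rcases lt_or_gt_of_ne hjm with hlt' | hgt
  · have hgj : g j = 0 := by
      by_contra hgj
      exact hlt'.not_ge (hmin (Finset.mem_filter.2 ⟨hj, hgj⟩) hlt'.le)
    rw [hgj, zero_mul]
  · rw [hlt hgt, mul_zero]

end LinearIndependent

section LeadingWord

attribute [local instance 100] LieRing.ofAssociativeRing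

variable (R : Type*) {α : Type*} [CommRing R]

/-- The word `w` as an element of the free associative algebra, realised as the monoid algebra of
the free monoid. -/
noncomputable def wordMonomial (w : List α) : MonoidAlgebra R (FreeMonoid α) :=
  MonoidAlgebra.single (FreeMonoid.ofList w) 1

/-- The coefficient of the word `w` in an element of the free associative algebra. -/
noncomputable def wordCoeff (w : List α) : MonoidAlgebra R (FreeMonoid α) →ₗ[R] R :=
  Finsupp.lapply (FreeMonoid.ofList w) ∘ₗ (MonoidAlgebra.coeffLinearEquiv R).toLinearMap

variable (α) in
/-- The canonical map from the free Lie algebra to the free associative algebra with its commutator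
bracket. -/
noncomputable def freeLieToWords : FreeLieAlgebra R α →ₗ⁅R⁆ MonoidAlgebra R (FreeMonoid α) :=
  FreeLieAlgebra.lift R fun a => wordMonomial R [a]

theorem wordMonomial_append (u v : List α) :
    wordMonomial R (u ++ v) = wordMonomial R u * wordMonomial R v := by
  simp [wordMonomial, MonoidAlgebra.single_mul_single, FreeMonoid.ofList_append]

theorem wordCoeff_wordMonomial_self (w : List α) : wordCoeff R w (wordMonomial R w) = 1 := by
  simp [wordCoeff, wordMonomial]

variable {R} {u v w : List α}

theorem wordCoeff_wordMonomial_of_ne (h : u ≠ v) : wordCoeff R u (wordMonomial R v) = 0 := by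
  simp [wordCoeff, wordMonomial, h.symm]

theorem mul_mem_of_mem_span_wordMonomial {s t : Set (List α)}
    {Q : Submodule R (MonoidAlgebra R (FreeMonoid α))} {x y : MonoidAlgebra R (FreeMonoid α)}
    (hx : x ∈ Submodule.span R (wordMonomial R '' s))
    (hy : y ∈ Submodule.span R (wordMonomial R '' t))
    (h : ∀ u ∈ s, ∀ v ∈ t, wordMonomial R (u ++ v) ∈ Q) : x * y ∈ Q := by
  have hxy := Submodule.mul_mem_mul hx hy
  rw [Submodule.span_mul_span] at hxy
  refine Submodule.span_le.2 ?_ hxy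
  rintro _ ⟨_, ⟨u, hu, rfl⟩, _, ⟨v, hv, rfl⟩, rfl⟩
  simpa only [SetLike.mem_coe, wordMonomial_append] using h u hu v hv

variable [LinearOrder α]

variable (R) in
/-- The span of the words that have the same length as `w` and are strictly larger. -/
noncomputable def wordSpanAbove (w : List α) : Submodule R (MonoidAlgebra R (FreeMonoid α)) :=
  Submodule.span R (wordMonomial R '' {z | z.length = w.length ∧ w < z})

variable (R) in
/-- The span of the words that have the same length as `w` and are at least `w`. -/
noncomputable def wordSpanFrom (w : List α) : Submodule R (MonoidAlgebra R (FreeMonoid α)) :=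
  Submodule.span R (wordMonomial R '' {z | z.length = w.length ∧ w ≤ z})

theorem mem_wordSpanFrom_of_sub_mem {x : MonoidAlgebra R (FreeMonoid α)}
    (hx : x - wordMonomial R w ∈ wordSpanAbove R w) : x ∈ wordSpanFrom R w := by
  have hle : wordSpanAbove R w ≤ wordSpanFrom R w :=
    Submodule.span_mono (Set.image_mono fun _ h => ⟨h.1, h.2.le⟩)
  simpa using add_mem (hle hx) (Submodule.subset_span ⟨w, ⟨rfl, le_rfl⟩, rfl⟩)

theorem wordCoeff_eq_zero_of_mem_wordSpanAbove (h : u ≤ w)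
    {x : MonoidAlgebra R (FreeMonoid α)} (hx : x ∈ wordSpanAbove R w) : wordCoeff R u x = 0 := by
  suffices wordSpanAbove R w ≤ LinearMap.ker (wordCoeff R u) from this hx
  rw [wordSpanAbove, Submodule.span_le]
  rintro _ ⟨z, ⟨-, hwz⟩, rfl⟩
  exact wordCoeff_wordMonomial_of_ne (h.trans_lt hwz).ne

/-- The product `x * y` has leading word `u ++ v`, and `y * x` contributes only words that are at
least `v ++ u`, hence larger than `u ++ v`. -/
theorem lie_sub_wordMonomial_mem_wordSpanAbove {x y : MonoidAlgebra R (FreeMonoid α)}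
    (hu : IsLyndon u) (hv : IsLyndon v) (huv : u < v)
    (hx : x - wordMonomial R u ∈ wordSpanAbove R u)
    (hy : y - wordMonomial R v ∈ wordSpanAbove R v) :
    ⁅x, y⁆ - wordMonomial R (u ++ v) ∈ wordSpanAbove R (u ++ v) := by
  have hxu : x ∈ wordSpanFrom R u := mem_wordSpanFrom_of_sub_mem hx
  have hyv : y ∈ wordSpanFrom R v := mem_wordSpanFrom_of_sub_mem hy
  have hdecomp : ⁅x, y⁆ - wordMonomial R (u ++ v) =
      (x - wordMonomial R u) * y + wordMonomial R u * (y - wordMonomial R v) - y * x := by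
    rw [LieRing.of_associative_ring_bracket, wordMonomial_append]
    noncomm_ring
  have mem_above {z : List α} (hlen : z.length = (u ++ v).length) (hz : u ++ v < z) :
      wordMonomial R z ∈ wordSpanAbove R (u ++ v) :=
    Submodule.subset_span ⟨z, ⟨hlen, hz⟩, rfl⟩
  rw [hdecomp]
  refine sub_mem (add_mem ?_ ?_) ?_
  · refine mul_mem_of_mem_span_wordMonomial hx hyv ?_
    rintro a ⟨hau, hlt⟩ b ⟨hbv, -⟩
    exact mem_above (by simp [hau, hbv]) (append_lt_append_of_length_le hlt hau.le _ _)
  · refine mul_mem_of_mem_span_wordMonomial (s := {u}) (Submodule.subset_span ⟨u, rfl, rfl⟩) hy ?_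
    rintro _ rfl b ⟨hbv, hlt⟩
    exact mem_above (by simp [hbv]) (strictMono_append_left _ hlt)
  · refine mul_mem_of_mem_span_wordMonomial hyv hxu ?_
    rintro b ⟨hbv, hb⟩ a ⟨hau, ha⟩
    refine mem_above (by simp [hau, hbv, add_comm]) ?_
    calc
      u ++ v < v := hu.append_lt_right hv huv
      _ ≤ v ++ u := self_le_append v u
      _ ≤ b ++ a := append_le_append_of_length_le hb hbv.le ha

theorem freeLieToWords_lyndonBracket_sub_mem (hw : IsLyndon w) :
    freeLieToWords R α (lyndonBracket R w) - wordMonomial R w ∈ wordSpanAbove R w := by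
  induction w, hw using IsLyndon.induction with
  | singleton a =>
    rw [lyndonBracket_singleton, freeLieToWords, FreeLieAlgebra.lift_of_apply, sub_self]
    exact zero_mem _
  | append u v h hu hv huv ihu ihv =>
    rw [lyndonBracket_append R h, LieHom.map_lie]
    exact lie_sub_wordMonomial_mem_wordSpanAbove hu hv huv ihu ihv

theorem wordCoeff_freeLieToWords_lyndonBracket (hw : IsLyndon w) (h : u ≤ w) :
    wordCoeff R u (freeLieToWords R α (lyndonBracket R w)) = wordCoeff R u (wordMonomial R w) :=
  sub_eq_zero.1 <| (map_sub (wordCoeff R u) _ _).symm.trans <|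
    wordCoeff_eq_zero_of_mem_wordSpanAbove h (freeLieToWords_lyndonBracket_sub_mem hw)

variable (R α) in
theorem linearIndependent_lyndonBracket :
    LinearIndependent R fun w : {w : List α // IsLyndon w} => lyndonBracket R w.1 := by
  refine linearIndependent_of_triangular
    (fun w => wordCoeff R w.1 ∘ₗ (freeLieToWords R α).toLinearMap) (fun u w huw => ?_) fun w => ?_
  · exact (wordCoeff_freeLieToWords_lyndonBracket w.2 huw.le).trans
      (wordCoeff_wordMonomial_of_ne (Subtype.coe_ne_coe.2 huw.ne))
  · exact (wordCoeff_freeLieToWords_lyndonBracket w.2 le_rfl).trans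
      (wordCoeff_wordMonomial_self R w.1)

end LeadingWord

section Witt

variable (R : Type*) [CommRing R]

/-- The brackets of the Lyndon words of length `n` as a basis of their span. -/
noncomputable def lyndonBasis (α : Type*) [LinearOrder α] (n : ℕ) :
    Module.Basis (lyndonWords α n) R (lyndonSpan R α n) :=
  (Module.Basis.span ((linearIndependent_lyndonBracket R α).comp
    _ (Set.inclusion_injective fun _ hw => hw.1))).map
    (LinearEquiv.ofEq _ _ (congrArg (Submodule.span R) (Set.image_eq_range _ _).symm))

variable [Nontrivial R]

theorem witt_formula_general (X : Type*) [Finite X] {n : ℕ} (hn : n ≠ 0) :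
    Module.Free R (freeLieComponent R X n) ∧
      (n : ℤ) * Module.finrank R (freeLieComponent R X n) =
        ∑ d ∈ n.divisors, ArithmeticFunction.moebius d * (Nat.card X : ℤ) ^ (n / d) := by
  let _ : LinearOrder X := LinearOrder.lift' _ (Finite.equivFin X).injective
  rw [freeLieComponent_eq_lyndonSpan]
  refine ⟨.of_basis (lyndonBasis R X n), ?_⟩
  rw [Module.finrank_eq_nat_card_basis (lyndonBasis R X n), Nat.card_coe_set_eq,
    mul_ncard_lyndonWords hn]

end Witt

theorem bracketSpan_eq_lieProduct {X : Type*} (A B : Submodule ℤ (FreeLieAlgebra ℤ X)) :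
    bracketSpan A B = lieProduct A B := by
  simp only [bracketSpan, eq_comm (b := ⁅_, _⁆)]
  exact (lieProduct_eq_span A B).symm

theorem freeLiePiece_eq_freeLieComponent (r n : ℕ) :
    freeLiePiece r n = freeLieComponent ℤ (Fin r) n := by
  induction n using Nat.twoStepInduction with
  | zero => rfl
  | one => rfl
  | more n _ ih => exact (congrArg (bracketSpan _) ih).trans (bracketSpan_eq_lieProduct _ _)

/-- **Witt's formula.** The degree-`n` graded piece `Lie_r^n` of the free Lie ring on `r`
generators is a free abelian group whose rank satisfies
`n · rank(Lie_r^n) = Σ_{d ∣ n} μ(d) · r^{n/d}`, where `μ` is the Möbius function. -/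
theorem witt_formula (r n : ℕ) (hn : 1 ≤ n) :
    Module.Free ℤ (freeLiePiece r n) ∧
      (n : ℤ) * (Module.finrank ℤ (freeLiePiece r n)) =
        ∑ d ∈ n.divisors, (ArithmeticFunction.moebius d : ℤ) * (r : ℤ) ^ (n / d) := by
  have h := witt_formula_general ℤ (Fin r) (Nat.one_le_iff_ne_zero.1 hn)
  rw [Nat.card_fin] at h
  rw [freeLiePiece_eq_freeLieComponent]
  exact h
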